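/- The expected number of constructors not suspended under a closure in a uniformly random λυ-term of size n converges to the constant 316/3 as n → ∞. In particular, the expected proportion of non-suspended constructors tends to 0. -/

import Mathlib

open Finset Filter

mutual
inductive Tm : Type
  | idx : Nat → Tm
  | lam : Tm → Tm
  | app : Tm → Tm → Tm
  | clos : Tm → Subst → Tm
inductive Subst : Type
  | slash : Tm → Subst
  | lift : Subst → Subst
  | shift : Subst
end

mutual
/-- Natural size of a λυ-term: every constructor weighs 1; index n has size n+1. -/
def Tm.size : Tm → Nat
  | .idx n => n + 1
  | .lam a => Tm.size a + 1
  | .app a b => Tm.size a + Tm.size b + 1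
  | .clos a s => Tm.size a + Subst.size s + 1
/-- Natural size of an explicit substitution. -/
def Subst.size : Subst → Nat
  | .slash a => Tm.size a + 1
  | .lift s => Subst.size s + 1
  | .shift => 1
end

/-- Number of λυ-terms of size `n`. -/
noncomputable def tcount (n : ℕ) : ℕ := Nat.card {a : Tm // Tm.size a = n}

/-- Number of explicit substitutions of size `n`. -/
noncomputable def scount (n : ℕ) : ℕ := Nat.card {s : Subst // Subst.size s = n}

/-- Expected value of the statistic `f` on a uniformly random λυ-term of size `n`
(the statistic is assumed to be bounded by the size, so summing `k` up to `n` suffices). -/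
noncomputable def expectTm (f : Tm → ℕ) (n : ℕ) : ℝ :=
  (∑ k ∈ Finset.range (n + 1),
      (k : ℝ) * (Nat.card {a : Tm // Tm.size a = n ∧ f a = k} : ℝ)) / (tcount n : ℝ)

/-- Number of constructors of a λυ-term not suspended under any closure
(constructors inside the substitution part of a closure are suspended). -/
def Tm.free : Tm → ℕ
  | .idx n => n + 1
  | .lam a => Tm.free a + 1
  | .app a b => Tm.free a + Tm.free b + 1
  | .clos a _ => Tm.free a + 1

/-!
With `C` the Catalan series, put `U = X * C`, so that `U = X + U ^ 2`. By the symbolic method the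
generating series `T` of λυ-terms satisfies `X * (1 + T) = U`, and the generating series of the
total number of non-suspended constructors is `g ∘ U` for an explicit rational `g`. The dominant
singularity of `U` is a square-root branch point at `X = 1 / 4`, where `U = 1 / 2`, while `g` is
analytic on the closed disc of radius `1 / 2`. Hence the coefficients of `g ∘ U` are asymptotically
`g' (1 / 2)` times those of `U`. The expectation is the ratio of the coefficients of `g ∘ U` and
`T`, those of `T` being four times larger than those of `U` in the limit, so it tends to
`g' (1 / 2) / 4 = (1264 / 3) / 4 = 316 / 3`.
-/

open Topology PowerSeries
open scoped Polynomial

/-- The power series `F` converges at `ρ`, with sum `v`. Real series summable in the sense of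
`HasSum` converge absolutely, so these values are multiplicative. -/
def HasValueAt (F : ℝ⟦X⟧) (ρ v : ℝ) : Prop :=
  HasSum (fun n => coeff n F * ρ ^ n) v

/-- The power series `F` and its formal derivative converge at `ρ`, with sums `v` and `d`. -/
structure HasJetAt (F : ℝ⟦X⟧) (ρ v d : ℝ) : Prop where
  value : HasValueAt F ρ v
  deriv : HasValueAt (d⁄dX ℝ F) ρ d

section Values

variable {F G L Q : ℝ⟦X⟧} {ρ v w d e l q : ℝ}

theorem HasValueAt.add (hF : HasValueAt F ρ v) (hG : HasValueAt G ρ w) :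
    HasValueAt (F + G) ρ (v + w) := by
  simpa only [HasValueAt, map_add, add_mul] using HasSum.add hF hG

theorem HasValueAt.neg (hF : HasValueAt F ρ v) : HasValueAt (-F) ρ (-v) := by
  simpa only [HasValueAt, map_neg, neg_mul] using HasSum.neg hF

theorem HasValueAt.mul (hF : HasValueAt F ρ v) (hG : HasValueAt G ρ w) :
    HasValueAt (F * G) ρ (v * w) := by
  have hterm (n : ℕ) : coeff n (F * G) * ρ ^ n =
      ∑ p ∈ antidiagonal n, (coeff p.1 F * ρ ^ p.1) * (coeff p.2 G * ρ ^ p.2) := by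
    rw [coeff_mul, sum_mul]
    refine sum_congr rfl fun p hp => ?_
    rw [← mem_antidiagonal.1 hp, pow_add]
    ring
  have hFn := HasSum.summable hF |>.norm
  have hGn := HasSum.summable hG |>.norm
  rw [HasValueAt, funext hterm, ← HasSum.tsum_eq hF, ← HasSum.tsum_eq hG,
    tsum_mul_tsum_eq_tsum_sum_antidiagonal_of_summable_norm hFn hGn]
  exact (summable_norm_sum_mul_antidiagonal_of_summable_norm hFn hGn).of_norm.hasSum

theorem hasValueAt_coe (p : ℝ[X]) (ρ : ℝ) : HasValueAt p ρ (p.eval ρ) := by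
  rw [Polynomial.eval_eq_sum_range]
  simp only [HasValueAt, Polynomial.coeff_coe]
  refine hasSum_sum_of_ne_finset_zero fun n hn => ?_
  rw [Polynomial.coeff_eq_zero_of_natDegree_lt (by simpa using hn), zero_mul]

theorem HasJetAt.add (hF : HasJetAt F ρ v d) (hG : HasJetAt G ρ w e) :
    HasJetAt (F + G) ρ (v + w) (d + e) where
  value := hF.value.add hG.value
  deriv := by simpa only [map_add] using hF.deriv.add hG.deriv

theorem HasJetAt.mul (hF : HasJetAt F ρ v d) (hG : HasJetAt G ρ w e) :
    HasJetAt (F * G) ρ (v * w) (v * e + w * d) where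
  value := hF.value.mul hG.value
  deriv := by
    simpa only [Derivation.leibniz, smul_eq_mul] using
      (hF.value.mul hG.deriv).add (hG.value.mul hF.deriv)

theorem hasJetAt_coe (p : ℝ[X]) (ρ : ℝ) : HasJetAt p ρ (p.eval ρ) (p.derivative.eval ρ) where
  value := hasValueAt_coe p ρ
  deriv := by simpa only [derivative_coe] using hasValueAt_coe p.derivative ρ

theorem constantCoeff_le_of_hasValueAt (hρ : 0 ≤ ρ) (hL : HasValueAt L ρ l)
    (hL0 : ∀ n, 0 ≤ coeff n L) : constantCoeff L ≤ l := by
  simpa using le_hasSum hL 0 fun n _ => mul_nonneg (hL0 n) (pow_nonneg hρ n)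

theorem abs_coeff_le_of_eq_one_add_mul {P : ℝ⟦X⟧} {n : ℕ} (hL0 : ∀ k, 0 ≤ coeff k L)
    (hG : G = 1 + L * G) (hP : ∀ k ≤ n, |coeff k G| ≤ coeff k P) :
    |coeff n G| ≤ coeff n (1 + L * P) := by
  have hone : |coeff n (1 : ℝ⟦X⟧)| = coeff n 1 := by
    rw [coeff_one]
    split_ifs <;> simp
  have hprod : |coeff n (L * G)| ≤ coeff n (L * P) := by
    rw [coeff_mul, coeff_mul]
    refine (abs_sum_le_sum_abs _ _).trans (sum_le_sum fun p hp => ?_)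
    rw [abs_mul, abs_of_nonneg (hL0 _)]
    exact mul_le_mul_of_nonneg_left (hP _ (HasAntidiagonal.antidiagonal.snd_le hp)) (hL0 _)
  calc |coeff n G| = |coeff n 1 + coeff n (L * G)| := by rw [← map_add, ← hG]
    _ ≤ coeff n 1 + coeff n (L * P) := (abs_add_le _ _).trans (add_le_add hone.le hprod)
    _ = coeff n (1 + L * P) := (map_add _ _ _).symm

theorem sum_abs_coeff_le_of_eq_one_add_mul (hρ : 0 ≤ ρ) (hL : HasValueAt L ρ l)
    (hL0 : ∀ n, 0 ≤ coeff n L) (hG : G = 1 + L * G) (n : ℕ) :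
    ∑ k ∈ range n, |coeff k G| * ρ ^ k ≤
      1 + l * ∑ k ∈ range n, |coeff k G| * ρ ^ k := by
  set P : ℝ[X] := trunc n (PowerSeries.mk fun k => |coeff k G|) with hP
  have hPcoeff (k : ℕ) : P.coeff k = if k < n then |coeff k G| else 0 := by
    rw [hP, coeff_trunc, coeff_mk]
  have hPeval : P.eval ρ = ∑ k ∈ range n, |coeff k G| * ρ ^ k := by
    rw [hP, Polynomial.eval, eval₂_trunc_eq_sum_range]
    simp only [coeff_mk, RingHom.id_apply]
  have hval : HasValueAt (1 + L * P) ρ (1 + l * P.eval ρ) := by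
    simpa using (hasValueAt_coe 1 ρ).add (hL.mul (hasValueAt_coe P ρ))
  have hcoeff (k : ℕ) (hk : k < n) : |coeff k G| ≤ coeff k (1 + L * (P : ℝ⟦X⟧)) := by
    refine abs_coeff_le_of_eq_one_add_mul hL0 hG fun j hj => ?_
    rw [Polynomial.coeff_coe, hPcoeff, if_pos (hj.trans_lt hk)]
  have hnonneg (k : ℕ) : 0 ≤ coeff k (1 + L * (P : ℝ⟦X⟧)) := by
    rw [map_add, coeff_mul, coeff_one]
    refine add_nonneg (by split_ifs <;> simp) (sum_nonneg fun p _ => mul_nonneg (hL0 _) ?_)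
    rw [Polynomial.coeff_coe, hPcoeff]
    split_ifs <;> positivity
  rw [← hPeval]
  nth_rw 1 [hPeval]
  calc ∑ k ∈ range n, |coeff k G| * ρ ^ k
      ≤ ∑ k ∈ range n, coeff k (1 + L * (P : ℝ⟦X⟧)) * ρ ^ k := by
        gcongr with k hk
        exact hcoeff k (mem_range.1 hk)
    _ ≤ 1 + l * P.eval ρ :=
        sum_le_hasSum _ (fun k _ => mul_nonneg (hnonneg k) (pow_nonneg hρ k)) hval

theorem HasValueAt.inv_one_sub (hρ : 0 ≤ ρ) (hL : HasValueAt L ρ l)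
    (hL0 : ∀ n, 0 ≤ coeff n L) (hl : l < 1) : HasValueAt (1 - L)⁻¹ ρ (1 - l)⁻¹ := by
  have hconst : constantCoeff (1 - L) ≠ 0 := by
    have := constantCoeff_le_of_hasValueAt hρ hL hL0
    rw [map_sub, map_one]
    linarith
  have hinv : (1 - L)⁻¹ * (1 - L) = 1 := PowerSeries.inv_mul_cancel _ hconst
  set G : ℝ⟦X⟧ := (1 - L)⁻¹
  have hbound (n : ℕ) : ∑ k ∈ range n, |coeff k G| * ρ ^ k ≤ (1 - l)⁻¹ := by
    have := sum_abs_coeff_le_of_eq_one_add_mul (G := G) hρ hL hL0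
      (by linear_combination hinv) n
    rw [← one_div, le_div_iff₀ (sub_pos.2 hl)]
    linarith
  have hsummable : Summable fun n => coeff n G * ρ ^ n := by
    refine Summable.of_norm ?_
    simp only [norm_mul, norm_pow, Real.norm_eq_abs, abs_of_nonneg hρ]
    exact summable_of_sum_range_le (fun k => by positivity) hbound
  obtain ⟨g, hg⟩ := hsummable
  have hprod : HasValueAt 1 ρ (g * (1 - l)) := by
    have hsub : HasValueAt (1 - L) ρ (1 - l) := by
      simpa [sub_eq_add_neg] using (hasValueAt_coe 1 ρ).add hL.neg
    simpa only [hinv] using HasValueAt.mul hg hsub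
  have hone : HasValueAt 1 ρ 1 := by simpa using hasValueAt_coe 1 ρ
  rwa [← eq_inv_of_mul_eq_one_left (HasSum.unique hprod hone)]

/-- The cofactor `Q` certifies that `F` has no zero in the closed disc of radius `ρ`: there
`F z * Q z = 1 - L z`, where `‖L z‖ ≤ L ρ < 1`. -/
theorem HasJetAt.inv (hρ : 0 ≤ ρ) (hF : HasJetAt F ρ v d) (hQ : HasValueAt Q ρ q)
    (hL : HasValueAt L ρ l) (hL0 : ∀ n, 0 ≤ coeff n L) (hl : l < 1) (hFQ : F * Q = 1 - L) :
    HasJetAt F⁻¹ ρ v⁻¹ (-v⁻¹ ^ 2 * d) := by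
  have hconst : constantCoeff F * constantCoeff Q ≠ 0 := by
    have := constantCoeff_le_of_hasValueAt hρ hL hL0
    rw [← map_mul, hFQ, map_sub, map_one]
    linarith
  have hFinv : F⁻¹ = Q * (1 - L)⁻¹ := by
    rw [← hFQ, PowerSeries.mul_inv_rev, ← mul_assoc,
      PowerSeries.mul_inv_cancel _ (right_ne_zero_of_mul hconst), one_mul]
  have hvalue : HasValueAt F⁻¹ ρ (q * (1 - l)⁻¹) := hFinv ▸ hQ.mul (hL.inv_one_sub hρ hL0 hl)
  have hmul : v * (q * (1 - l)⁻¹) = 1 := by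
    refine HasSum.unique (hF.value.mul hvalue) ?_
    rw [PowerSeries.mul_inv_cancel _ (left_ne_zero_of_mul hconst)]
    simpa [HasValueAt] using hasValueAt_coe 1 ρ
  rw [eq_inv_of_mul_eq_one_right hmul] at hvalue
  refine ⟨hvalue, ?_⟩
  rw [derivative_inv']
  simpa only [pow_two, neg_mul] using (hvalue.mul hvalue).neg.mul hF.deriv

end Values

section Catalan

theorem add_two_mul_catalan_succ (n : ℕ) :
    (n + 2) * catalan (n + 1) = (4 * n + 2) * catalan n := by
  refine Nat.eq_of_mul_eq_mul_left n.succ_pos ?_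
  calc (n + 1) * ((n + 2) * catalan (n + 1))
      = (n + 1) * (n + 1).centralBinom := by rw [← succ_mul_catalan_eq_centralBinom]
    _ = 2 * (2 * n + 1) * ((n + 1) * catalan n) := by
        rw [Nat.succ_mul_centralBinom_succ, succ_mul_catalan_eq_centralBinom]
    _ = (n + 1) * ((4 * n + 2) * catalan n) := by ring

theorem catalan_pos (n : ℕ) : 0 < catalan n := by
  have h : 0 < (n + 1) * catalan n := succ_mul_catalan_eq_centralBinom n ▸ n.centralBinom_pos
  exact pos_of_mul_pos_right h n.succ_pos.le

theorem tendsto_catalan_div_catalan_succ :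
    Tendsto (fun n => (catalan n / catalan (n + 1) : ℝ)) atTop (𝓝 (1 / 4)) := by
  have hratio (n : ℕ) : (catalan n / catalan (n + 1) : ℝ) = (n + 2) / (4 * n + 2) := by
    have hpos : (0 : ℝ) < catalan (n + 1) := by exact_mod_cast catalan_pos (n + 1)
    rw [div_eq_div_iff hpos.ne' (by positivity), mul_comm, eq_comm]
    exact_mod_cast add_two_mul_catalan_succ n
  simp only [hratio]
  have hlim := tendsto_add_mul_div_add_mul_atTop_nhds (𝕜 := ℝ) 2 2 1 (d := 4) (by norm_num)
  refine hlim.congr fun n => ?_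
  ring_nf

/-- The series `U = X * C`, for `C` the Catalan series: the solution of `U = X + U ^ 2`, through
which all generating series of λυ-terms are expressed. -/
noncomputable def shiftedCatalan : ℝ⟦X⟧ :=
  (X * catalanSeries).map (Nat.castRingHom ℝ)

local notation "U" => shiftedCatalan

theorem coeff_shiftedCatalan_pow_nonneg (n k : ℕ) : 0 ≤ coeff n (U ^ k) := by
  rw [shiftedCatalan, ← map_pow, coeff_map]
  exact Nat.cast_nonneg _

theorem coeff_succ_shiftedCatalan (n : ℕ) : coeff (n + 1) U = catalan n := by
  rw [shiftedCatalan, coeff_map, coeff_succ_X_mul, catalanSeries_coeff, eq_natCast]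

theorem constantCoeff_shiftedCatalan : constantCoeff U = 0 := by
  rw [shiftedCatalan, map_mul, map_X, map_mul, constantCoeff_X, zero_mul]

theorem shiftedCatalan_eq_X_add_sq : U = X + U ^ 2 := by
  have h := congrArg (PowerSeries.map (Nat.castRingHom ℝ)) catalanSeries_sq_mul_X_add_one
  rw [map_add, map_mul, map_pow, map_X, map_one] at h
  rw [shiftedCatalan, map_mul, map_X]
  linear_combination -X * h

theorem shiftedCatalan_pow_add_two (k : ℕ) : U ^ (k + 2) = U ^ (k + 1) - X * U ^ k := by
  linear_combination -U ^ k * shiftedCatalan_eq_X_add_sq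

theorem derivative_shiftedCatalan_mul : d⁄dX ℝ U * (1 - 2 * U) = 1 := by
  have h := congrArg (d⁄dX ℝ) shiftedCatalan_eq_X_add_sq
  rw [map_add, derivative_X, derivative_pow] at h
  push_cast at h
  linear_combination h

theorem coeff_shiftedCatalan_pow_mul_derivative_le (n k : ℕ) :
    coeff n (U ^ k * d⁄dX ℝ U) ≤ (1 / 2) ^ k * ((n + 1) * catalan n) := by
  induction k with
  | zero => rw [pow_zero, pow_zero, one_mul, one_mul, coeff_derivative,
      coeff_succ_shiftedCatalan, mul_comm]
  | succ k ih =>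
    have hpow : U ^ k = U ^ k * d⁄dX ℝ U - C 2 * (U ^ (k + 1) * d⁄dX ℝ U) := by
      rw [map_ofNat]
      linear_combination -U ^ k * derivative_shiftedCatalan_mul
    have hstep := coeff_shiftedCatalan_pow_nonneg n k
    rw [hpow, map_sub, coeff_C_mul] at hstep
    rw [pow_succ (1 / 2 : ℝ)]
    linarith

theorem coeff_succ_shiftedCatalan_pow_succ_le (n k : ℕ) :
    coeff (n + 1) (U ^ (k + 1)) ≤ (k + 1) * (1 / 2) ^ k * catalan n := by
  have hderiv : coeff (n + 1) (U ^ (k + 1)) * (n + 1) =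
      (k + 1) * coeff n (U ^ k * d⁄dX ℝ U) := by
    rw [← coeff_derivative, derivative_pow, Nat.add_sub_cancel, mul_assoc,
      ← map_natCast (C (R := ℝ)), coeff_C_mul, Nat.cast_succ]
  refine le_of_mul_le_mul_right ?_ (Nat.cast_add_one_pos n : (0 : ℝ) < n + 1)
  rw [hderiv]
  calc (k + 1) * coeff n (U ^ k * d⁄dX ℝ U)
      ≤ (k + 1) * ((1 / 2) ^ k * ((n + 1) * catalan n)) := by
        gcongr
        exact coeff_shiftedCatalan_pow_mul_derivative_le n k
    _ = (k + 1) * (1 / 2) ^ k * catalan n * (n + 1) := by ring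

theorem tendsto_coeff_succ_shiftedCatalan_pow_div (k : ℕ) :
    Tendsto (fun n => coeff (n + 1) (U ^ k) / catalan n) atTop (𝓝 (2 * k * (1 / 2) ^ k)) := by
  induction k using Nat.twoStepInduction with
  | zero => simp [coeff_one]
  | one =>
    have hone (n : ℕ) : coeff (n + 1) (U ^ 1) / (catalan n : ℝ) = 1 := by
      rw [pow_one, coeff_succ_shiftedCatalan]
      exact div_self (by exact_mod_cast (catalan_pos n).ne')
    rw [funext hone]
    norm_num
  | more k ih ih' =>
    rw [← tendsto_add_atTop_iff_nat 1] at ih' ⊢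
    have hlim := ih'.sub (ih.mul tendsto_catalan_div_catalan_succ)
    convert hlim using 2 with n
    · have hpos : (0 : ℝ) < catalan n := by exact_mod_cast catalan_pos n
      rw [shiftedCatalan_pow_add_two, map_sub, coeff_succ_X_mul, sub_div,
        div_mul_div_cancel₀ hpos.ne']
    · push_cast
      ring

theorem coeff_succ_subst_shiftedCatalan (g : ℝ⟦X⟧) (n : ℕ) :
    coeff (n + 1) (g.subst U) = ∑' k, coeff (k + 1) g * coeff (n + 1) (U ^ (k + 1)) := by
  have hU : HasSubst U := HasSubst.of_constantCoeff_zero' constantCoeff_shiftedCatalan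
  have hfin := coeff_subst_finite' hU g (n + 1)
  rw [coeff_subst' hU, ← tsum_eq_finsum (L := .unconditional ℕ) hfin,
    (summable_of_hasFiniteSupport hfin).tsum_eq_zero_add]
  simp [coeff_one]

/-- Transfer: dominated convergence over the exponent of `U` reduces coefficient asymptotics of
`g ∘ U` to those of the powers of `U`, where `U = 1 / 2` at the singularity `X = 1 / 4`. -/
theorem tendsto_coeff_succ_subst_shiftedCatalan_div {g : ℝ⟦X⟧} {d : ℝ}
    (hg : HasValueAt (d⁄dX ℝ g) (1 / 2) d) :
    Tendsto (fun n => coeff (n + 1) (g.subst U) / catalan n) atTop (𝓝 d) := by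
  have hpos (n : ℕ) : (0 : ℝ) < catalan n := by exact_mod_cast catalan_pos n
  have hterm (k : ℕ) :
      coeff k (d⁄dX ℝ g) * (1 / 2) ^ k = coeff (k + 1) g * ((k + 1) * (1 / 2) ^ k) := by
    rw [coeff_derivative, mul_assoc]
  rw [← HasSum.tsum_eq hg]
  simp only [coeff_succ_subst_shiftedCatalan, ← tsum_div_const, hterm]
  refine tendsto_tsum_of_dominated_convergence (HasSum.summable hg).norm (fun k => ?_)
    (Eventually.of_forall fun n k => ?_)
  · convert (tendsto_coeff_succ_shiftedCatalan_pow_div (k + 1)).const_mul (coeff (k + 1) g)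
      using 2 with n
    · exact mul_div_assoc _ _ _
    · push_cast
      ring
  · rw [hterm, mul_div_assoc, norm_mul, norm_mul]
    refine mul_le_mul_of_nonneg_left ?_ (norm_nonneg _)
    rw [Real.norm_of_nonneg (div_nonneg (coeff_shiftedCatalan_pow_nonneg _ _) (hpos n).le),
      Real.norm_of_nonneg (by positivity), div_le_iff₀ (hpos n)]
    exact coeff_succ_shiftedCatalan_pow_succ_le n k

end Catalan

section Symbol

theorem map_inv_mul_map {k S : Type*} [Field k] [Semiring S] (φ : k⟦X⟧ →+* S) {F : k⟦X⟧}
    (hF : constantCoeff F ≠ 0) : φ F⁻¹ * φ F = 1 := by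
  rw [← map_mul, PowerSeries.inv_mul_cancel _ hF, map_one]

theorem hasJetAt_inv_coe {p q r : ℝ[X]} {ρ : ℝ} (hρ : 0 ≤ ρ) (hpq : p * q = 1 - r)
    (hr0 : ∀ n, 0 ≤ r.coeff n) (hr : r.eval ρ < 1) :
    HasJetAt (p : ℝ⟦X⟧)⁻¹ ρ (p.eval ρ)⁻¹ (-(p.eval ρ)⁻¹ ^ 2 * p.derivative.eval ρ) := by
  refine (hasJetAt_coe p ρ).inv hρ (hasValueAt_coe q ρ) (hasValueAt_coe r ρ) ?_ hr ?_
  · simpa only [Polynomial.coeff_coe] using hr0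
  · rw [← Polynomial.coe_mul, hpq, Polynomial.coe_sub, Polynomial.coe_one]

theorem hasJetAt_inv_one_sub_X : HasJetAt (1 - X)⁻¹ (1 / 2) 2 4 := by
  have h := hasJetAt_inv_coe (p := 1 - .X) (q := 1) (r := .X) (ρ := 1 / 2) (by norm_num)
    (mul_one _) (fun n => by rw [Polynomial.coeff_X]; split_ifs <;> norm_num) (by norm_num)
  convert h using 1 <;> norm_num

theorem hasJetAt_inv_one_sub_X_add_sq : HasJetAt (1 - X + X ^ 2)⁻¹ (1 / 2) (4 / 3) 0 := by
  have h := hasJetAt_inv_coe (p := 1 - .X + .X ^ 2) (q := (1 + .X) * (1 - .X ^ 3)) (r := .X ^ 6)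
    (ρ := 1 / 2) (by norm_num) (by ring)
    (fun n => by rw [Polynomial.coeff_X_pow]; split_ifs <;> norm_num) (by norm_num)
  convert h using 1 <;> norm_num

theorem hasJetAt_inv_one_sub_two_mul_X_add_cube_sub :
    HasJetAt (1 - 2 * X + X ^ 3 - X ^ 4)⁻¹ (1 / 2) 16 448 := by
  have h := hasJetAt_inv_coe (p := 1 - 2 * .X + .X ^ 3 - .X ^ 4) (q := 1 + .X + .X ^ 2)
    (r := .X + .X ^ 2 + .X ^ 3 + .X ^ 6) (ρ := 1 / 2) (by norm_num) (by ring)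
    (fun n => by
      simp only [Polynomial.coeff_add, Polynomial.coeff_X_pow, Polynomial.coeff_X]
      split_ifs <;> norm_num) (by norm_num)
  convert h using 1 <;> norm_num [two_mul]

/-- The series `g` for which `g ∘ U` is the generating series of the total number of non-suspended
constructors over all λυ-terms. It comes from solving the linear equation for that series, with
`C` and `1 / (1 - X)` rewritten as `1 / (1 - U)` and `1 / (1 - U + U ^ 2)`. -/
noncomputable def freeSymbol : ℝ⟦X⟧ :=
  ((1 - X + X ^ 2) * X * (1 - X)⁻¹ + X ^ 2 * (1 - X) ^ 2 * (1 - X + X ^ 2)⁻¹) *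
    (1 - 2 * X + X ^ 3 - X ^ 4)⁻¹

theorem hasJetAt_freeSymbol : HasJetAt freeSymbol (1 / 2) (40 / 3) (1264 / 3) := by
  have hfirst : HasJetAt ((1 - X + X ^ 2) * X) (1 / 2) (3 / 8) (3 / 4) := by
    convert hasJetAt_coe ((1 - .X + .X ^ 2) * .X) (1 / 2) using 1 <;> norm_num
  have hsecond : HasJetAt (X ^ 2 * (1 - X) ^ 2) (1 / 2) (1 / 16) 0 := by
    convert hasJetAt_coe (.X ^ 2 * (1 - .X) ^ 2) (1 / 2) using 1 <;>
      norm_num [Polynomial.derivative_pow]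
  have hsymbol := ((hfirst.mul hasJetAt_inv_one_sub_X).add
    (hsecond.mul hasJetAt_inv_one_sub_X_add_sq)).mul hasJetAt_inv_one_sub_two_mul_X_add_cube_sub
  rw [freeSymbol]
  convert hsymbol using 1 <;> norm_num

end Symbol

section GenSeries

variable {α β R : Type*} [CommSemiring R]

/-- The size function `s` has finitely many objects of each size. -/
def FiniteLevels (s : α → ℕ) : Prop :=
  ∀ n, {a | s a = n}.Finite

/-- The ordinary generating series, by the size `s`, of the total weight `f` of the objects of each
size. It is only meaningful if `s` has finite levels, as `finsum` vanishes on infinite supports. -/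
noncomputable def genSeries (s : α → ℕ) (f : α → R) : R⟦X⟧ :=
  PowerSeries.mk fun n => ∑ᶠ a ∈ {a | s a = n}, f a

theorem coeff_genSeries (s : α → ℕ) (f : α → R) (n : ℕ) :
    coeff n (genSeries s f) = ∑ᶠ a ∈ {a | s a = n}, f a :=
  coeff_mk _ _

theorem FiniteLevels.sumElim {s : α → ℕ} {t : β → ℕ} (hs : FiniteLevels s) (ht : FiniteLevels t) :
    FiniteLevels (Sum.elim s t) := by
  intro n
  refine (((hs n).image Sum.inl).union ((ht n).image Sum.inr)).subset ?_
  rintro (a | b) h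
  · exact .inl ⟨a, h, rfl⟩
  · exact .inr ⟨b, h, rfl⟩

theorem setOf_add_eq_biUnion (s : α → ℕ) (t : β → ℕ) (n : ℕ) :
    {p : α × β | s p.1 + t p.2 = n} =
      ⋃ ij ∈ (antidiagonal n : Set (ℕ × ℕ)), {a | s a = ij.1} ×ˢ {b | t b = ij.2} := by
  ext p
  simp

theorem FiniteLevels.prod {s : α → ℕ} {t : β → ℕ} (hs : FiniteLevels s) (ht : FiniteLevels t) :
    FiniteLevels fun p : α × β => s p.1 + t p.2 := by
  intro n
  rw [setOf_add_eq_biUnion]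
  exact (antidiagonal n).finite_toSet.biUnion fun ij _ => (hs ij.1).prod (ht ij.2)

theorem genSeries_add {s : α → ℕ} (hs : FiniteLevels s) (f g : α → R) :
    genSeries s (fun a => f a + g a) = genSeries s f + genSeries s g := by
  ext n
  simp only [map_add, coeff_genSeries]
  exact finsum_mem_add_distrib (hs n)

theorem genSeries_comp_equiv (e : α ≃ β) (s : β → ℕ) (f : β → R) :
    genSeries (s ∘ e) (f ∘ e) = genSeries s f := by
  ext n
  simp only [coeff_genSeries]
  exact finsum_mem_eq_of_bijOn e (e.bijOn fun a => Iff.rfl) fun a _ => rfl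

theorem genSeries_add_one (s : α → ℕ) (f : α → R) :
    genSeries (fun a => s a + 1) f = X * genSeries s f := by
  ext n
  cases n with
  | zero => simp [coeff_genSeries]
  | succ n => simp only [coeff_succ_X_mul, coeff_genSeries, Nat.add_right_cancel_iff]

theorem genSeries_sumElim {s : α → ℕ} {t : β → ℕ} (hs : FiniteLevels s) (ht : FiniteLevels t)
    (f : α → R) (g : β → R) :
    genSeries (Sum.elim s t) (Sum.elim f g) = genSeries s f + genSeries t g := by
  ext n
  have hlevel : {x | Sum.elim s t x = n} = Sum.inl '' {a | s a = n} ∪ Sum.inr '' {b | t b = n} := by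
    ext (a | b) <;> simp
  have hdisj : Disjoint (Sum.inl '' {a | s a = n}) (Sum.inr '' {b | t b = n}) :=
    Set.disjoint_image_inl_image_inr
  rw [map_add, coeff_genSeries, coeff_genSeries, coeff_genSeries, hlevel,
    finsum_mem_union hdisj ((hs n).image _) ((ht n).image _),
    finsum_mem_image Sum.inl_injective.injOn, finsum_mem_image Sum.inr_injective.injOn]
  simp only [Sum.elim_inl, Sum.elim_inr]

theorem finsum_mem_prod_mul {A : Set α} {B : Set β} (hA : A.Finite) (hB : B.Finite) (f : α → R)
    (g : β → R) :
    ∑ᶠ p ∈ A ×ˢ B, f p.1 * g p.2 = (∑ᶠ a ∈ A, f a) * ∑ᶠ b ∈ B, g b := by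
  lift A to Finset α using hA
  lift B to Finset β using hB
  rw [← coe_product, finsum_mem_coe_finset, finsum_mem_coe_finset, finsum_mem_coe_finset,
    sum_mul_sum, sum_product]

theorem genSeries_prod {s : α → ℕ} {t : β → ℕ} (hs : FiniteLevels s) (ht : FiniteLevels t)
    (f : α → R) (g : β → R) :
    genSeries (fun p : α × β => s p.1 + t p.2) (fun p => f p.1 * g p.2) =
      genSeries s f * genSeries t g := by
  ext n
  have hdisj : (antidiagonal n : Set (ℕ × ℕ)).PairwiseDisjoint
      fun ij => {a | s a = ij.1} ×ˢ {b | t b = ij.2} := by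
    rintro ⟨i, j⟩ - ⟨i', j'⟩ - hne
    refine Set.disjoint_left.2 ?_
    rintro ⟨a, b⟩ ⟨rfl, rfl⟩ ⟨rfl, rfl⟩
    exact hne rfl
  rw [coeff_genSeries, setOf_add_eq_biUnion, coeff_mul, finsum_mem_biUnion hdisj
    (finite_toSet _) fun ij _ => (hs ij.1).prod (ht ij.2), finsum_mem_coe_finset]
  refine sum_congr rfl fun ij _ => ?_
  rw [finsum_mem_prod_mul (hs _) (ht _), coeff_genSeries, coeff_genSeries]

theorem finiteLevels_id : FiniteLevels (id : ℕ → ℕ) := fun n => Set.finite_singleton n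

theorem genSeries_id (f : ℕ → R) : genSeries id f = PowerSeries.mk f := by
  ext n
  rw [coeff_genSeries, coeff_mk]
  exact finsum_mem_singleton

theorem finiteLevels_unit : FiniteLevels fun _ : Unit => 0 := fun _ => Set.toFinite _

theorem genSeries_unit (c : R) : genSeries (fun _ : Unit => 0) (fun _ => c) = C c := by
  ext n
  rw [coeff_genSeries, coeff_C]
  rcases eq_or_ne n 0 with rfl | hn
  · simp [finsum_unique]
  · simp [hn, hn.symm]

end GenSeries

section Terms

/-- The recursive decomposition of a term into its head constructor and arguments. -/
def Tm.decomposition : ℕ ⊕ Tm ⊕ (Tm × Tm) ⊕ (Tm × Subst) ≃ Tm where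
  toFun := Sum.elim idx (Sum.elim lam (Sum.elim (fun p => app p.1 p.2) fun p => clos p.1 p.2))
  invFun
    | idx n => .inl n
    | lam a => .inr (.inl a)
    | app a b => .inr (.inr (.inl (a, b)))
    | clos a s => .inr (.inr (.inr (a, s)))
  left_inv := by rintro (n | a | p | p) <;> rfl
  right_inv := by rintro (n | a | ⟨a, b⟩ | ⟨a, s⟩) <;> rfl

/-- The recursive decomposition of a substitution into its head constructor and arguments. -/
def Subst.decomposition : Tm ⊕ Subst ⊕ Unit ≃ Subst where
  toFun := Sum.elim slash (Sum.elim lift fun _ => shift)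
  invFun
    | slash a => .inl a
    | lift s => .inr (.inl s)
    | shift => .inr (.inr ())
  left_inv := by rintro (a | s | ⟨⟩) <;> rfl
  right_inv := by rintro (a | s | _) <;> rfl

theorem finite_setOf_size_lt (n : ℕ) :
    {a : Tm | a.size < n}.Finite ∧ {s : Subst | s.size < n}.Finite := by
  induction n with
  | zero => simp
  | succ n ih =>
    obtain ⟨hT, hS⟩ := ih
    constructor
    · refine ((Set.finite_lt_nat n |>.image Tm.idx).union <| (hT.image Tm.lam).union <|
        (hT.image2 Tm.app hT).union <| hT.image2 Tm.clos hS).subset ?_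
      rintro (m | a | ⟨a, b⟩ | ⟨a, s⟩) h <;> simp_all [Tm.size] <;> omega
    · refine ((hT.image Subst.slash).union <| (hS.image Subst.lift).union <|
        Set.finite_singleton Subst.shift).subset ?_
      rintro (a | s | _) h <;> simp_all [Subst.size]

theorem Tm.finiteLevels_size : FiniteLevels Tm.size := fun n =>
  (finite_setOf_size_lt (n + 1)).1.subset fun _ h => Nat.lt_succ_of_le (le_of_eq h)

theorem Subst.finiteLevels_size : FiniteLevels Subst.size := fun n =>
  (finite_setOf_size_lt (n + 1)).2.subset fun _ h => Nat.lt_succ_of_le (le_of_eq h)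

theorem Tm.genSeries_size {R : Type*} [CommSemiring R] (f : Tm → R) :
    genSeries Tm.size f = X * (PowerSeries.mk (fun n => f (.idx n)) +
      (genSeries Tm.size (fun a => f (.lam a)) +
      (genSeries (fun p : Tm × Tm => p.1.size + p.2.size) (fun p => f (.app p.1 p.2)) +
      genSeries (fun p : Tm × Subst => p.1.size + p.2.size) (fun p => f (.clos p.1 p.2))))) := by
  have hT := Tm.finiteLevels_size
  have hTT := hT.prod hT
  have hTS := hT.prod Subst.finiteLevels_size
  rw [← genSeries_id, ← genSeries_sumElim hTT hTS, ← genSeries_sumElim hT (hTT.sumElim hTS),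
    ← genSeries_sumElim finiteLevels_id (hT.sumElim (hTT.sumElim hTS)), ← genSeries_add_one,
    ← genSeries_comp_equiv Tm.decomposition]
  congr 1 <;> ext (n | a | p | p) <;> simp [Tm.decomposition, Tm.size]

theorem Subst.genSeries_size {R : Type*} [CommSemiring R] (f : Subst → R) :
    genSeries Subst.size f = X * (genSeries Tm.size (fun a => f (.slash a)) +
      (genSeries Subst.size (fun s => f (.lift s)) + C (f .shift))) := by
  have hT := Tm.finiteLevels_size
  have hS := Subst.finiteLevels_size
  rw [← genSeries_unit, ← genSeries_sumElim hS finiteLevels_unit,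
    ← genSeries_sumElim hT (hS.sumElim finiteLevels_unit), ← genSeries_add_one,
    ← genSeries_comp_equiv Subst.decomposition]
  congr 1 <;> ext (a | s | _) <;> simp [Subst.decomposition, Subst.size]

/-- The generating series of λυ-terms by size. -/
noncomputable def termSeries : ℝ⟦X⟧ :=
  genSeries Tm.size fun _ => 1

/-- The generating series of explicit substitutions by size. -/
noncomputable def substSeries : ℝ⟦X⟧ :=
  genSeries Subst.size fun _ => 1

/-- The generating series of the total number of non-suspended constructors over all λυ-terms of a
given size. -/
noncomputable def freeSeries : ℝ⟦X⟧ :=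
  genSeries Tm.size fun a => (a.free : ℝ)

theorem Tm.free_le_size : ∀ a : Tm, a.free ≤ a.size
  | .idx _ => le_rfl
  | .lam a => Nat.succ_le_succ a.free_le_size
  | .app a b => Nat.succ_le_succ (add_le_add a.free_le_size b.free_le_size)
  | .clos a _ => Nat.succ_le_succ (a.free_le_size.trans (Nat.le_add_right _ _))

theorem sum_range_mul_card_fiber {f : Tm → ℕ} (hf : ∀ a, f a ≤ a.size) (n : ℕ) :
    ∑ k ∈ range (n + 1), (k : ℝ) * Nat.card {a : Tm // a.size = n ∧ f a = k} =
      coeff n (genSeries Tm.size fun a => (f a : ℝ)) := by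
  classical
  have hfin := Tm.finiteLevels_size n
  have hmaps : ∀ a ∈ hfin.toFinset, f a ∈ range (n + 1) := fun a ha =>
    mem_range_succ_iff.2 ((hf a).trans_eq (hfin.mem_toFinset.1 ha))
  rw [coeff_genSeries, finsum_mem_eq_finite_toFinset_sum _ hfin, ← sum_fiberwise_of_maps_to hmaps]
  refine sum_congr rfl fun k _ => ?_
  have hcard : Nat.card {a : Tm // a.size = n ∧ f a = k} = #{a ∈ hfin.toFinset | f a = k} :=
    Nat.subtype_card _ fun a => by simp
  rw [sum_congr rfl fun a ha => congrArg Nat.cast (mem_filter.1 ha).2, sum_const, nsmul_eq_mul,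
    hcard, mul_comm]

theorem tcount_eq_coeff (n : ℕ) : (tcount n : ℝ) = coeff n termSeries := by
  have hfin := Tm.finiteLevels_size n
  rw [termSeries, coeff_genSeries, finsum_mem_eq_finite_toFinset_sum _ hfin, tcount,
    Nat.subtype_card hfin.toFinset fun a => by simp]
  simp

theorem expectTm_eq_coeff_div_coeff {f : Tm → ℕ} (hf : ∀ a, f a ≤ a.size) (n : ℕ) :
    expectTm f n =
      coeff n (genSeries Tm.size fun a => (f a : ℝ)) / coeff n termSeries := by
  rw [expectTm, sum_range_mul_card_fiber hf, tcount_eq_coeff]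

end Terms

section Equations

theorem mk_one_mul_mk_one_eq_mk_add_one (R : Type*) [Semiring R] :
    (PowerSeries.mk 1 * PowerSeries.mk 1 : R⟦X⟧) = PowerSeries.mk fun n => (n + 1 : R) := by
  ext n
  simp [coeff_mul]

local notation "U" => shiftedCatalan
local notation "J" => (PowerSeries.mk 1 : ℝ⟦X⟧)
local notation "T" => termSeries
local notation "S" => substSeries
local notation "A" => freeSeries

theorem substSeries_eq : S = X * (T + (S + 1)) :=
  Subst.genSeries_size fun _ => 1

theorem termSeries_eq : T = X * (J + (T + (T * T + T * S))) := by
  have hT := Tm.finiteLevels_size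
  have hTT := genSeries_prod (R := ℝ) hT hT (fun _ => 1) fun _ => 1
  have hTS := genSeries_prod (R := ℝ) hT Subst.finiteLevels_size (fun _ => 1) fun _ => 1
  simp only [mul_one] at hTT hTS
  rw [substSeries, termSeries, ← hTT, ← hTS]
  exact Tm.genSeries_size fun _ => 1

theorem freeSeries_eq :
    A = X * (J * J + (A + T + (A * T + T * A + T * T + (A * S + T * S)))) := by
  have hT := Tm.finiteLevels_size
  have hS := Subst.finiteLevels_size
  have hTT := hT.prod hT
  have hTS := hT.prod hS
  rw [mk_one_mul_mk_one_eq_mk_add_one]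
  simp only [freeSeries, termSeries, substSeries]
  rw [← genSeries_add hT, ← genSeries_prod hT hT, ← genSeries_prod hT hT, ← genSeries_prod hT hT,
    ← genSeries_prod hT hS, ← genSeries_prod hT hS, ← genSeries_add hTT, ← genSeries_add hTT,
    ← genSeries_add hTS, Tm.genSeries_size]
  simp only [Tm.free, Nat.cast_add, Nat.cast_one, mul_one, one_mul]

theorem X_mul_one_add_termSeries : X * (1 + T) = U := by
  have hJ : J * (1 - X) = 1 := mk_one_mul_one_sub_eq_one ℝ
  -- Both `X * (1 + T)` and `U` solve `Y = X + Y ^ 2`, which has one root without constant term.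
  have hquad : (X * (1 + T) - U) * (1 - X * (1 + T) - U) = 0 := by
    linear_combination X * (1 - X) * termSeries_eq + X ^ 2 * hJ +
      X ^ 2 * T * substSeries_eq - shiftedCatalan_eq_X_add_sq
  refine sub_eq_zero.1 ((mul_eq_zero.1 hquad).resolve_right fun h => ?_)
  simpa [constantCoeff_shiftedCatalan] using congrArg constantCoeff h

theorem coeff_succ_termSeries (n : ℕ) : coeff (n + 1) T = catalan (n + 1) := by
  rw [← coeff_succ_shiftedCatalan, ← X_mul_one_add_termSeries, coeff_succ_X_mul, map_add,
    coeff_one, if_neg n.succ_ne_zero, zero_add]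

theorem one_add_termSeries_mul_one_sub : (1 + T) * (1 - U) = 1 := by
  refine mul_left_cancel₀ (X_ne_zero (R := ℝ)) ?_
  linear_combination (1 - U) * X_mul_one_add_termSeries + shiftedCatalan_eq_X_add_sq

theorem freeSeries_mul_eq :
    A * (1 - 2 * U + U ^ 3 - U ^ 4) =
      (1 - U + U ^ 2) * U * (1 + T) + U ^ 2 * (1 - U) ^ 2 * J := by
  have hJ : J * (1 - X) = 1 := mk_one_mul_one_sub_eq_one ℝ
  have hU := shiftedCatalan_eq_X_add_sq
  have hT : T = U * (1 + T) := by linear_combination one_add_termSeries_mul_one_sub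
  have hXT : X * T = U - X := by linear_combination X_mul_one_add_termSeries
  have hXS : S * (1 - X) = U := by
    linear_combination substSeries_eq + X_mul_one_add_termSeries
  have hlinear : A * (1 - X - 2 * (X * T) - X * S) = T + X * J * (J - 1) := by
    linear_combination freeSeries_eq - termSeries_eq
  have hcleared : A * (1 - 2 * U + X * U - X ^ 2) = (1 - X) * (U * (1 + T)) + X ^ 2 * J := by
    linear_combination (1 - X) * hlinear + 2 * (1 - X) * A * hXT +
      X * A * hXS + (1 - X) * hT + X * J * hJ
  have hX : X = U - U ^ 2 := by linear_combination -hU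
  rw [hX] at hcleared
  linear_combination hcleared

theorem map_freeSymbol (φ : ℝ⟦X⟧ →+* ℝ⟦X⟧) (hφ : φ X = U) : φ freeSymbol = A := by
  have hJ : J * (1 - X) = 1 := mk_one_mul_one_sub_eq_one ℝ
  have hterm := map_inv_mul_map φ (F := 1 - X) (by simp)
  have hidx := map_inv_mul_map φ (F := 1 - X + X ^ 2) (by simp)
  have hden := map_inv_mul_map φ (F := 1 - 2 * X + X ^ 3 - X ^ 4) (by simp)
  simp only [map_add, map_sub, map_mul, map_pow, map_one, map_ofNat, hφ] at hterm hidx hden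
  replace hterm : φ (1 - X)⁻¹ = 1 + T :=
    left_inv_eq_right_inv hterm ((mul_comm _ _).trans one_add_termSeries_mul_one_sub)
  replace hidx : φ (1 - X + X ^ 2)⁻¹ = J := by
    refine left_inv_eq_right_inv hidx ?_
    linear_combination hJ - J * shiftedCatalan_eq_X_add_sq
  rw [freeSymbol]
  simp only [map_add, map_sub, map_mul, map_pow, map_one, hφ, hterm, hidx]
  linear_combination A * hden - φ (1 - 2 * X + X ^ 3 - X ^ 4)⁻¹ * freeSeries_mul_eq

theorem freeSymbol_subst_shiftedCatalan : freeSymbol.subst U = A := by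
  have hU : HasSubst U := .of_constantCoeff_zero' constantCoeff_shiftedCatalan
  rw [← coe_substAlgHom hU]
  exact map_freeSymbol (substAlgHom (R := ℝ) hU) (substAlgHom_X hU)

end Equations

theorem tendsto_expectTm_free_add_one :
    Tendsto (fun n => expectTm Tm.free (n + 1)) atTop (𝓝 (316 / 3)) := by
  have hcoeff : Tendsto (fun n => coeff (n + 1) freeSeries / catalan n) atTop (𝓝 (1264 / 3)) :=
    freeSymbol_subst_shiftedCatalan ▸
      tendsto_coeff_succ_subst_shiftedCatalan_div hasJetAt_freeSymbol.deriv
  have hlim := hcoeff.mul tendsto_catalan_div_catalan_succ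
  convert hlim using 2 with n
  · have hpos : (0 : ℝ) < catalan n := by exact_mod_cast catalan_pos n
    rw [expectTm_eq_coeff_div_coeff Tm.free_le_size, coeff_succ_termSeries,
      div_mul_div_cancel₀ hpos.ne', freeSeries]
  · norm_num

/-- the expected number of non-suspended constructors tends to 316/3;
in particular the expected proportion of non-suspended constructors tends to 0. -/
theorem stmt12 :
    Tendsto (fun n : ℕ => expectTm Tm.free n) atTop (nhds (316 / 3)) ∧
      Tendsto (fun n : ℕ => expectTm Tm.free n / (n : ℝ)) atTop (nhds 0) := by
  have hlim : Tendsto (fun n : ℕ => expectTm Tm.free n) atTop (nhds (316 / 3)) :=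
    (tendsto_add_atTop_iff_nat 1).1 tendsto_expectTm_free_add_one
  exact ⟨hlim, hlim.div_atTop tendsto_natCast_atTop_atTop⟩
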